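/- For all integers n ≥ 0 and k ≥ 0 one has C(n+k,k)·E[V_n^k] = E[C(n+k−N_{n+k}, k)], where C(a,b) denotes the binomial coefficient; equivalently, C(n+k,k)·E[vol(T_n)^k]/vol(T)^k = Σ_{i=0}^{n+k} C(n+k−i, k)·P(N_{n+k} = i). -/

import Mathlib

open MeasureTheory

noncomputable section

/-- The triangle with vertices (0,0), (1,0), (0,1). -/
def T : Set (ℝ × ℝ) := convexHull ℝ {(0, 0), (1, 0), (0, 1)}

/-- The uniform distribution on `T`: twice Lebesgue measure restricted to `T`. -/
def μT : Measure (ℝ × ℝ) := (2 : ENNReal) • (volume.restrict T)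

/-- Joint law of `n` independent uniform points in `T`. -/
def P (n : ℕ) : Measure (Fin n → ℝ × ℝ) := Measure.pi fun _ => μT

/-- The random convex chain: convex hull of the points together with `(1,0)` and `(0,1)`. -/
def Tchain (n : ℕ) (ω : Fin n → ℝ × ℝ) : Set (ℝ × ℝ) :=
  convexHull ℝ (Set.range ω ∪ {(1, 0), (0, 1)})

/-- Normalized area `V_n = 2 vol(T_n)`. -/
def V (n : ℕ) (ω : Fin n → ℝ × ℝ) : ℝ := 2 * (volume (Tchain n ω)).toReal

/-- Number of vertices of `T_n` other than the two corners. -/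
def N (n : ℕ) (ω : Fin n → ℝ × ℝ) : ℕ :=
  (Set.extremePoints ℝ (Tchain n ω)).ncard - 2

/-- Normalized moments `q_{n,k} = C(n+k,k) E[V_n^k]`. -/
def q (n k : ℕ) : ℝ := ((n + k).choose k : ℝ) * ∫ ω, (V n ω) ^ k ∂ P n

/-- Probability generating function of `N_n`. -/
def G (n : ℕ) (t : ℝ) : ℝ := ∫ ω, t ^ (N n ω) ∂ P n

/-- Harmonic number. -/
def H (j : ℕ) : ℝ := ∑ i ∈ Finset.range j, 1 / ((i : ℝ) + 1)

/-- Generalized harmonic number of order 2. -/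
def H2 (j : ℕ) : ℝ := ∑ i ∈ Finset.range j, 1 / ((i : ℝ) + 1) ^ 2

/-- `c(k,ℓ)`: elementary symmetric polynomial `e_k` of `2/(j(j+1))`, `j = 1,…,ℓ`. -/
def c (k l : ℕ) : ℝ :=
  ∑ S ∈ (Finset.Icc 1 l).powersetCard k, ∏ j ∈ S, 2 / ((j : ℝ) * ((j : ℝ) + 1))

/-!
Almost surely a set `S` of sample points avoids the vertices of the anchored hull of the whole
sample if and only if `S` lies in the anchored hull of the remaining points, since a polytope is the
convex hull of its vertices. Hence `C(n + k - N, k)` counts the `k`-element sets of points with this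
property. There are `C(n + k, k)` candidates, and conditionally on the other `n` points each of them
qualifies with probability `V ^ k`, where `V` is the normalized area of the hull of those points.
-/

open ProbabilityTheory Set Function
open scoped Finset

section ConvexHull

variable {E κ : Type*} [AddCommGroup E] [Module ℝ E] [TopologicalSpace E]
  [IsTopologicalAddGroup E] [ContinuousSMul ℝ E] [T2Space E]

lemma isClosed_setOf_mem_convexHull_range [Finite κ] :
    IsClosed {p : (κ → E) × E | p.2 ∈ convexHull ℝ (range p.1)} := by
  classical
  have := Fintype.ofFinite κ
  have convexHull_eq (v : κ → E) :
      convexHull ℝ (range v) = Fintype.linearCombination ℝ v '' stdSimplex ℝ κ := by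
    rw [← convexHull_rangle_single_eq_stdSimplex, LinearMap.image_convexHull, ← range_comp]
    congr 2
    ext i
    simp only [comp_apply, Fintype.linearCombination_apply_single, one_smul]
  have eq_image : {p : (κ → E) × E | p.2 ∈ convexHull ℝ (range p.1)} =
      Prod.fst '' {y : ((κ → E) × E) × stdSimplex ℝ κ |
        ∑ i, (y.2 : κ → ℝ) i • y.1.1 i = y.1.2} := by
    ext p
    simp only [convexHull_eq, Fintype.linearCombination_apply, mem_image, mem_ofPred_eq]
    constructor
    · rintro ⟨w, hw, hsum⟩
      exact ⟨(p, ⟨w, hw⟩), hsum, rfl⟩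
    · rintro ⟨⟨_, w⟩, hsum, rfl⟩
      exact ⟨w, w.2, hsum⟩
  rw [eq_image]
  have continuous_weight (i : κ) :
      Continuous fun y : ((κ → E) × E) × stdSimplex ℝ κ => (y.2 : κ → ℝ) i :=
    (continuous_apply i).comp (continuous_subtype_val.comp continuous_snd)
  refine isClosedMap_fst_of_compactSpace _ (isClosed_eq ?_ (by fun_prop))
  exact continuous_finsetSum _ fun i _ => (continuous_weight i).smul (by fun_prop)

variable [LocallyConvexSpace ℝ E] {s A : Set E}

lemma convexHull_extremePoints_convexHull_of_finite (hs : s.Finite) :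
    convexHull ℝ ((convexHull ℝ s).extremePoints ℝ) = convexHull ℝ s := by
  have hext := hs.subset (extremePoints_convexHull_subset (𝕜 := ℝ))
  rw [← (hext.isClosed_convexHull ℝ).closure_eq]
  exact closure_convexHull_extremePoints (hs.isCompact_convexHull ℝ) (convex_convexHull ℝ s)

lemma subset_convexHull_diff_iff (hs : s.Finite) (hA : A ⊆ s) :
    A ⊆ convexHull ℝ (s \ A) ↔ Disjoint A ((convexHull ℝ s).extremePoints ℝ) := by
  refine ⟨fun h => disjoint_left.2 fun x hxA hx => ?_, fun h => hA.trans ?_⟩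
  · have hx' : x ∈ (convexHull ℝ (s \ A)).extremePoints ℝ :=
      inter_extremePoints_subset_extremePoints_of_subset (convexHull_mono sdiff_subset) ⟨h hxA, hx⟩
    exact (extremePoints_convexHull_subset hx').2 hxA
  · have hext : (convexHull ℝ s).extremePoints ℝ ⊆ s \ A :=
      subset_sdiff.2 ⟨extremePoints_convexHull_subset, h.symm⟩
    calc s ⊆ convexHull ℝ s := subset_convexHull ℝ s
      _ = convexHull ℝ ((convexHull ℝ s).extremePoints ℝ) :=
        (convexHull_extremePoints_convexHull_of_finite hs).symm
      _ ⊆ convexHull ℝ (s \ A) := convexHull_mono hext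

end ConvexHull

section AnchoredHull

variable {E ι κ : Type*} [AddCommGroup E] [Module ℝ E]

/-- The convex hull of a family of points and a set `F` of fixed anchors: the set `T_m` of the
paper is `anchoredHull {(1, 0), (0, 1)} ω`. -/
def anchoredHull (F : Set E) (ω : ι → E) : Set E :=
  convexHull ℝ (range ω ∪ F)

open Classical in
/-- The indices of the points of the family `ω` that are vertices of its anchored hull. Almost
surely these correspond to the vertices other than the anchors, so their number is the paper's
`N_m`. -/
def vertexIndices [Fintype ι] (F : Set E) (ω : ι → E) : Finset ι :=
  {i | ω i ∈ (anchoredHull F ω).extremePoints ℝ}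

/-- The event that the points indexed by `S` all lie in the anchored hull of the other points; for
an independent sample its probability is the moment of order `#S` of the measure of that hull. -/
def coveredEvent (F : Set E) (S : Finset ι) : Set (ι → E) :=
  {ω | ∀ i ∈ S, ω i ∈ anchoredHull F fun j : {j // j ∉ S} => ω j}

variable {F : Set E} {ω : ι → E}

lemma mem_vertexIndices [Fintype ι] {i : ι} :
    i ∈ vertexIndices F ω ↔ ω i ∈ (anchoredHull F ω).extremePoints ℝ := by
  simp only [vertexIndices, Finset.mem_filter_univ]

lemma anchoredHull_comp_equiv (e : κ ≃ ι) (ω : ι → E) :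
    anchoredHull F (ω ∘ e) = anchoredHull F ω := by
  rw [anchoredHull, e.surjective.range_comp, anchoredHull]

lemma anchoredHull_subset {K : Set E} (hK : Convex ℝ K) (hω : ∀ i, ω i ∈ K) (hF : F ⊆ K) :
    anchoredHull F ω ⊆ K :=
  convexHull_min (union_subset (range_subset_iff.2 hω) hF) hK

lemma subset_extremePoints_anchoredHull {K : Set E} (hK : Convex ℝ K) (hω : ∀ i, ω i ∈ K)
    (hF : F ⊆ K.extremePoints ℝ) : F ⊆ (anchoredHull F ω).extremePoints ℝ := fun _ hp =>
  inter_extremePoints_subset_extremePoints_of_subset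
    (anchoredHull_subset hK hω (hF.trans extremePoints_subset))
    ⟨subset_convexHull ℝ _ (Or.inr hp), hF hp⟩

lemma ncard_extremePoints_anchoredHull [Fintype ι] (hF : F.Finite) (hinj : Injective ω)
    (hdisj : Disjoint (range ω) F) (hext : F ⊆ (anchoredHull F ω).extremePoints ℝ) :
    ((anchoredHull F ω).extremePoints ℝ).ncard = #(vertexIndices F ω) + F.ncard := by
  have hsplit : (anchoredHull F ω).extremePoints ℝ = ω '' vertexIndices F ω ∪ F := by
    refine Subset.antisymm (fun p hp => ?_) (union_subset ?_ hext)
    · refine (extremePoints_convexHull_subset hp).imp_left ?_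
      rintro ⟨i, rfl⟩
      exact mem_image_of_mem ω (mem_vertexIndices.2 hp)
    · exact image_subset_iff.2 fun i hi => mem_vertexIndices.1 hi
  rw [hsplit, ncard_union_eq (hdisj.mono_left (image_subset_range ω _)) (toFinite _) hF,
    ncard_image_of_injective _ hinj, ncard_coe_finset]

section Topology

variable [TopologicalSpace E] [IsTopologicalAddGroup E] [ContinuousSMul ℝ E] [T2Space E]

lemma isClosed_setOf_mem_anchoredHull [Finite ι] (hF : F.Finite) :
    IsClosed {p : (ι → E) × E | p.2 ∈ anchoredHull F p.1} := by
  have := hF.to_subtype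
  let addAnchors (p : (ι → E) × E) : (ι ⊕ F → E) × E := (Sum.elim p.1 (↑), p.2)
  have hcont : Continuous addAnchors := by
    refine Continuous.prodMk (continuous_pi ?_) continuous_snd
    rintro (i | f) <;> simp only [Sum.elim_inl, Sum.elim_inr] <;> fun_prop
  simpa only [anchoredHull, addAnchors, preimage_ofPred_eq, Sum.elim_range, Subtype.range_coe]
    using (isClosed_setOf_mem_convexHull_range (κ := ι ⊕ F)).preimage hcont

lemma isClosed_coveredEvent [Finite ι] (hF : F.Finite) (S : Finset ι) :
    IsClosed (coveredEvent F S) := by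
  simp only [coveredEvent, ofPred_forall]
  exact isClosed_biInter fun i _ => (isClosed_setOf_mem_anchoredHull hF).preimage
    (f := fun ω : ι → E => (fun j : {j // j ∉ S} => ω j, ω i)) (by fun_prop)

variable [LocallyConvexSpace ℝ E] [Fintype ι]

lemma mem_coveredEvent_iff_disjoint_vertexIndices (hF : F.Finite) (hinj : Injective ω)
    (hdisj : Disjoint (range ω) F) {S : Finset ι} :
    ω ∈ coveredEvent F S ↔ Disjoint S (vertexIndices F ω) := by
  have hrange : (range fun j : {j // j ∉ S} => ω j) = range ω \ ω '' S := by
    rw [← image_compl_eq_range_sdiff_image hinj, image_eq_range]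
    rfl
  have hdiff : (range fun j : {j // j ∉ S} => ω j) ∪ F = (range ω ∪ F) \ ω '' S := by
    rw [union_sdiff_distrib, hrange,
      (hdisj.mono_left (image_subset_range ω S)).symm.sdiff_eq_left]
  have hcovered : ω ∈ coveredEvent F S ↔ ω '' S ⊆ convexHull ℝ ((range ω ∪ F) \ ω '' S) := by
    rw [← hdiff, image_subset_iff]
    rfl
  rw [hcovered, subset_convexHull_diff_iff ((finite_range ω).union hF)
    ((image_subset_range ω S).trans subset_union_left), disjoint_image_left,
    ← Finset.disjoint_coe, Set.disjoint_left, Set.disjoint_left]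
  simp only [mem_vertexIndices, Finset.mem_coe, Set.mem_preimage, anchoredHull]

lemma choose_card_sub_card_vertexIndices (hF : F.Finite) (hinj : Injective ω)
    (hdisj : Disjoint (range ω) F) (k : ℕ) :
    (((Fintype.card ι - #(vertexIndices F ω)).choose k : ℕ) : ℝ) =
      ∑ S ∈ Finset.powersetCard k (Finset.univ : Finset ι), (coveredEvent F S).indicator 1 ω := by
  classical
  have hfilter : {S ∈ Finset.powersetCard k (Finset.univ : Finset ι) | ω ∈ coveredEvent F S} =
      Finset.powersetCard k (vertexIndices F ω)ᶜ := by
    ext S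
    simp only [mem_coveredEvent_iff_disjoint_vertexIndices hF hinj hdisj, Finset.mem_filter,
      Finset.mem_powersetCard, Finset.subset_univ, true_and, Finset.subset_compl_iff_disjoint_right,
      and_comm]
  simp only [indicator_apply, Pi.one_apply, Finset.sum_boole, hfilter, Finset.card_powersetCard,
    Finset.card_compl]

end Topology

end AnchoredHull

section IndependentSample

variable {α ι : Type*} [MeasurableSpace α] [Fintype ι] {μ : Measure α}

lemma prod_pi_measureReal_setOf_forall_mem {β : Type*} [MeasurableSpace β] {ν : Measure β}
    [SFinite ν] [IsFiniteMeasure μ] {H : β → Set α}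
    (hH : MeasurableSet {p : β × α | p.2 ∈ H p.1}) :
    ((Measure.pi fun _ : ι => μ).prod ν).real {z | ∀ i, z.1 i ∈ H z.2} =
      ∫ y, μ.real (H y) ^ Fintype.card ι ∂ν := by
  have hmeas : MeasurableSet {z : (ι → α) × β | ∀ i, z.1 i ∈ H z.2} := by
    simp only [ofPred_forall]
    exact .iInter fun i => hH.preimage (f := fun z : (ι → α) × β => (z.2, z.1 i)) (by fun_prop)
  have hsection (y : β) : Measure.pi (fun _ : ι => μ)
      ((fun x => (x, y)) ⁻¹' {z : (ι → α) × β | ∀ i, z.1 i ∈ H z.2}) =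
        μ (H y) ^ Fintype.card ι := by
    have hbox : (fun x => (x, y)) ⁻¹' {z : (ι → α) × β | ∀ i, z.1 i ∈ H z.2} =
        univ.pi fun _ => H y :=
      Set.ext fun x => forall_congr' fun _ => true_imp_iff.symm
    rw [hbox, Measure.pi_pi, Finset.prod_const, Finset.card_univ]
  have hmeasH : Measurable fun y => μ (H y) := measurable_measure_prodMk_left hH
  simp only [measureReal_def, ← ENNReal.toReal_pow]
  rw [integral_toReal (hmeasH.pow_const _).aemeasurable
    (.of_forall fun y => ENNReal.pow_lt_top (measure_lt_top μ _)), Measure.prod_apply_symm hmeas]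
  simp only [hsection]

variable [IsProbabilityMeasure μ]

lemma ae_pi_forall_of_ae {p : α → Prop} (hp : ∀ᵐ x ∂μ, p x) :
    ∀ᵐ ω ∂Measure.pi fun _ : ι => μ, ∀ i, p (ω i) :=
  ae_all_iff.2 fun _ => Measure.tendsto_eval_ae_ae.eventually hp

lemma ae_pi_disjoint_range {F : Set α} (hF : μ F = 0) :
    ∀ᵐ ω ∂Measure.pi fun _ : ι => μ, Disjoint (range ω) F := by
  filter_upwards [ae_pi_forall_of_ae (measure_eq_zero_iff_ae_notMem.1 hF)] with ω hω
  exact disjoint_left.2 (forall_mem_range.2 hω)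

lemma ae_pi_injective [MeasurableEq α] [NullSingletonClass μ] :
    ∀ᵐ ω ∂Measure.pi fun _ : ι => μ, Injective ω := by
  have ae_ne_prod : ∀ᵐ z ∂μ.prod μ, z.1 ≠ z.2 :=
    measure_eq_zero_iff_ae_notMem.1 <|
      (Measure.measure_prod_null (measurableSet_diagonal (α := α))).2 <| .of_forall fun x => by
        simp [preimage]
  have ae_ne (i j : ι) : ∀ᵐ ω ∂Measure.pi fun _ : ι => μ, i ≠ j → ω i ≠ ω j := by
    refine Filter.eventually_imp_distrib_left.2 fun hij => ?_
    have hindep : IndepFun (fun ω : ι → α => ω i) (fun ω => ω j) (Measure.pi fun _ => μ) :=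
      (iIndepFun_pi (X := fun _ x => x) fun _ => aemeasurable_id).indepFun hij
    have hlaw : (Measure.pi fun _ : ι => μ).map (fun ω => (ω i, ω j)) = μ.prod μ := by
      rw [hindep.map_prod_eq_prod_map_map (measurable_pi_apply i).aemeasurable
          (measurable_pi_apply j).aemeasurable,
        (measurePreserving_eval _ i).map_eq, (measurePreserving_eval _ j).map_eq]
    exact ae_of_ae_map (f := fun ω : ι → α => (ω i, ω j)) (by fun_prop) (hlaw ▸ ae_ne_prod)
  filter_upwards [ae_all_iff.2 fun i => ae_all_iff.2 (ae_ne i)] with ω hω i j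
  exact not_imp_not.1 (hω i j)

end IndependentSample

lemma integral_comp_eq_sum_measureReal_fiber {Ω : Type*} [MeasurableSpace Ω] {μ : Measure Ω}
    [IsFiniteMeasure μ] {X : Ω → ℕ} (hX : AEMeasurable X μ) {m : ℕ} (hm : ∀ᵐ ω ∂μ, X ω ≤ m)
    (f : ℕ → ℝ) :
    ∫ ω, f (X ω) ∂μ = ∑ i ∈ Finset.range (m + 1), f i * μ.real {ω | X ω = i} := by
  have hsupp : ∀ᵐ i ∂μ.map X, i ∈ (Finset.range (m + 1) : Set ℕ) := by
    rw [ae_map_iff hX (by measurability)]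
    filter_upwards [hm] with ω hω
    simpa only [Finset.coe_range, mem_Iio] using Nat.lt_succ_of_le hω
  rw [← integral_map hX (by fun_prop), ← Measure.restrict_eq_self_of_ae_mem hsupp,
    setIntegral_finset _ (IntegrableOn.finset)]
  refine Finset.sum_congr rfl fun i _ => ?_
  rw [map_measureReal_apply_of_aemeasurable hX (measurableSet_singleton i), smul_eq_mul, mul_comm]
  rfl

section RandomAnchoredHull

lemma integral_measureReal_anchoredHull_pow_congr {E ι κ : Type*} [AddCommGroup E] [Module ℝ E]
    [MeasurableSpace E] [Fintype ι] [Fintype κ] {F : Set E} {μ : Measure E} [SigmaFinite μ]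
    (e : κ ≃ ι) (k : ℕ) :
    ∫ ω, μ.real (anchoredHull F ω) ^ k ∂Measure.pi (fun _ : ι => μ) =
      ∫ ω, μ.real (anchoredHull F ω) ^ k ∂Measure.pi (fun _ : κ => μ) := by
  rw [← (measurePreserving_piCongrLeft (fun _ : ι => μ) e).integral_comp']
  refine integral_congr_ae (.of_forall fun ω => ?_)
  have hcomp : MeasurableEquiv.piCongrLeft (fun _ => E) e ω ∘ e = ω :=
    funext (Equiv.piCongrLeft_apply_apply (fun _ => E) e ω)
  simp only [← anchoredHull_comp_equiv e (MeasurableEquiv.piCongrLeft (fun _ => E) e ω), hcomp]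

variable {E ι : Type*} [AddCommGroup E] [Module ℝ E] [TopologicalSpace E]
  [IsTopologicalAddGroup E] [ContinuousSMul ℝ E] [T2Space E] [MeasurableSpace E] [BorelSpace E]
  {F : Set E}

lemma measurableSet_anchoredHull [Finite ι] (hF : F.Finite) (ω : ι → E) :
    MeasurableSet (anchoredHull F ω) :=
  (((finite_range ω).union hF).isClosed_convexHull ℝ).measurableSet

variable [SecondCountableTopology E] [Fintype ι] {μ : Measure E}
  [IsProbabilityMeasure μ]

lemma measureReal_coveredEvent [DecidableEq ι] (hF : F.Finite) (S : Finset ι) :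
    (Measure.pi fun _ : ι => μ).real (coveredEvent F S) =
      ∫ ω, μ.real (anchoredHull F ω) ^ #S ∂Measure.pi (fun _ : {i // i ∉ S} => μ) := by
  let split := MeasurableEquiv.piEquivPiSubtypeProd (fun _ : ι => E) (· ∈ S)
  have hsplit : MeasurePreserving split (Measure.pi fun _ => μ)
      ((Measure.pi fun _ => μ).prod (Measure.pi fun _ => μ)) := by
    convert measurePreserving_piEquivPiSubtypeProd (fun _ : ι => μ) (· ∈ S)
  have hpre : coveredEvent F S = split ⁻¹' {z | ∀ i, z.1 i ∈ anchoredHull F z.2} :=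
    Set.ext fun ω => (Subtype.forall (p := (· ∈ S))
      (q := fun i => ω i ∈ anchoredHull F fun j : {j // j ∉ S} => ω j)).symm
  rw [hpre, measureReal_def, hsplit.measure_preimage_equiv, ← measureReal_def,
    prod_pi_measureReal_setOf_forall_mem (isClosed_setOf_mem_anchoredHull hF).measurableSet,
    Fintype.card_coe]

variable [NullSingletonClass μ] [LocallyConvexSpace ℝ E]

lemma ae_mem_coveredEvent_iff (hF : F.Finite) (S : Finset ι) :
    ∀ᵐ ω ∂Measure.pi fun _ : ι => μ, ω ∈ coveredEvent F S ↔ Disjoint S (vertexIndices F ω) := by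
  filter_upwards [ae_pi_injective, ae_pi_disjoint_range (hF.measure_zero μ)] with ω hinj hdisj
  exact mem_coveredEvent_iff_disjoint_vertexIndices hF hinj hdisj

lemma aemeasurable_card_vertexIndices (hF : F.Finite) :
    AEMeasurable (fun ω : ι → E => #(vertexIndices F ω)) (Measure.pi fun _ => μ) := by
  classical
  refine ⟨fun ω => ∑ i : ι, (coveredEvent F {i})ᶜ.indicator 1 ω,
    Finset.measurable_fun_sum _ fun i _ =>
      measurable_const.indicator (isClosed_coveredEvent hF {i}).measurableSet.compl, ?_⟩
  filter_upwards [ae_all_iff.2 fun i => ae_mem_coveredEvent_iff (μ := μ) hF {i}] with ω hω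
  simp only [indicator_apply, Pi.one_apply, mem_compl_iff, hω, Finset.disjoint_singleton_left,
    not_not, Finset.sum_boole, Finset.filter_univ_mem, Nat.cast_id]

theorem choose_mul_integral_measureReal_anchoredHull_pow (hF : F.Finite) (n k : ℕ) :
    ((n + k).choose k : ℝ) *
        ∫ ω, μ.real (anchoredHull F ω) ^ k ∂Measure.pi (fun _ : Fin n => μ) =
      ∫ ω, ((n + k - #(vertexIndices F ω)).choose k : ℝ) ∂Measure.pi
        (fun _ : Fin (n + k) => μ) := by
  have hprob (S : Finset (Fin (n + k))) (hS : #S = k) :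
      (Measure.pi fun _ => μ).real (coveredEvent F S) =
        ∫ ω, μ.real (anchoredHull F ω) ^ k ∂Measure.pi (fun _ : Fin n => μ) := by
    have e : Fin n ≃ {i // i ∉ S} := Fintype.equivOfCardEq (by simp [hS])
    rw [measureReal_coveredEvent hF, hS, integral_measureReal_anchoredHull_pow_congr e]
  have hmeas (S : Finset (Fin (n + k))) : MeasurableSet (coveredEvent F S) :=
    (isClosed_coveredEvent hF S).measurableSet
  have hcount : ∀ᵐ ω ∂Measure.pi fun _ : Fin (n + k) => μ,
      ((n + k - #(vertexIndices F ω)).choose k : ℝ) =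
        ∑ S ∈ Finset.powersetCard k Finset.univ, (coveredEvent F S).indicator 1 ω := by
    filter_upwards [ae_pi_injective, ae_pi_disjoint_range (hF.measure_zero μ)] with ω hinj hdisj
    simpa only [Fintype.card_fin] using choose_card_sub_card_vertexIndices hF hinj hdisj k
  symm
  calc ∫ ω, ((n + k - #(vertexIndices F ω)).choose k : ℝ) ∂Measure.pi (fun _ : Fin (n + k) => μ)
    _ = ∑ S ∈ Finset.powersetCard k Finset.univ,
          (Measure.pi fun _ : Fin (n + k) => μ).real (coveredEvent F S) := by
      rw [integral_congr_ae hcount, integral_finsetSum _ fun S _ =>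
        (integrable_const 1).indicator (hmeas S)]
      exact Finset.sum_congr rfl fun S _ => integral_indicator_one (hmeas S)
    _ = ((n + k).choose k : ℝ) *
          ∫ ω, μ.real (anchoredHull F ω) ^ k ∂Measure.pi (fun _ : Fin n => μ) := by
      rw [Finset.sum_congr rfl fun S hS => hprob S (Finset.mem_powersetCard.1 hS).2,
        Finset.sum_const, Finset.card_powersetCard, Finset.card_fin, nsmul_eq_mul]

end RandomAnchoredHull

section UniformDistribution

variable {E : Type*} [AddCommGroup E] [Module ℝ E] [TopologicalSpace E]
  [IsTopologicalAddGroup E] [ContinuousSMul ℝ E] [T2Space E] [LocallyConvexSpace ℝ E]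
  [SecondCountableTopology E] [MeasurableSpace E] [BorelSpace E] {K F : Set E} {ν : Measure E}

theorem stmt0_general [NullSingletonClass ν] (hK : Convex ℝ K) (hKm : MeasurableSet K)
    (hK_ne_zero : ν K ≠ 0) (hK_ne_top : ν K ≠ ⊤) (hF : F.Finite) (hFK : F ⊆ K.extremePoints ℝ)
    (n k : ℕ) :
    (((n + k).choose k : ℝ) *
        ∫ ω, (ν.real (anchoredHull F ω) / ν.real K) ^ k ∂Measure.pi (fun _ : Fin n => ν[|K]) =
      ∫ ω, ((n + k - (((anchoredHull F ω).extremePoints ℝ).ncard - F.ncard)).choose k : ℝ)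
        ∂Measure.pi (fun _ : Fin (n + k) => ν[|K])) ∧
    (((n + k).choose k : ℝ) *
        ∫ ω, (ν.real (anchoredHull F ω) / ν.real K) ^ k ∂Measure.pi (fun _ : Fin n => ν[|K]) =
      ∑ i ∈ Finset.range (n + k + 1), ((n + k - i).choose k : ℝ) *
        (Measure.pi fun _ : Fin (n + k) => ν[|K]).real
          {ω | ((anchoredHull F ω).extremePoints ℝ).ncard - F.ncard = i}) := by
  have := cond_isProbabilityMeasure_of_finite hK_ne_zero hK_ne_top
  have : NullSingletonClass ν[|K] := ⟨fun x => cond_absolutelyContinuous (measure_singleton x)⟩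
  have hvol : ∀ᵐ ω ∂Measure.pi fun _ : Fin n => ν[|K],
      (ν.real (anchoredHull F ω) / ν.real K) ^ k = ν[|K].real (anchoredHull F ω) ^ k := by
    filter_upwards [ae_pi_forall_of_ae (ae_cond_mem hKm)] with ω hω
    have hsub := anchoredHull_subset hK hω (hFK.trans extremePoints_subset)
    rw [measureReal_def ν[|K], cond_apply hKm, inter_eq_self_of_subset_right hsub,
      ENNReal.toReal_mul, ENNReal.toReal_inv, div_eq_inv_mul, measureReal_def, measureReal_def]
  have hcard : ∀ᵐ ω ∂Measure.pi fun _ : Fin (n + k) => ν[|K],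
      ((anchoredHull F ω).extremePoints ℝ).ncard - F.ncard = #(vertexIndices F ω) := by
    filter_upwards [ae_pi_forall_of_ae (ae_cond_mem hKm), ae_pi_injective,
      ae_pi_disjoint_range (hF.measure_zero ν[|K])] with ω hω hinj hdisj
    rw [ncard_extremePoints_anchoredHull hF hinj hdisj
      (subset_extremePoints_anchoredHull hK hω hFK), Nat.add_sub_cancel]
  have hchoose : ∀ᵐ ω ∂Measure.pi fun _ : Fin (n + k) => ν[|K],
      ((n + k - (((anchoredHull F ω).extremePoints ℝ).ncard - F.ncard)).choose k : ℝ) =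
        (n + k - #(vertexIndices F ω)).choose k :=
    hcard.mono fun ω hω => by rw [hω]
  have hmoment := choose_mul_integral_measureReal_anchoredHull_pow (μ := ν[|K]) hF n k
  rw [← integral_congr_ae hvol, ← integral_congr_ae hchoose] at hmoment
  refine ⟨hmoment, hmoment.trans ?_⟩
  refine integral_comp_eq_sum_measureReal_fiber
    ((aemeasurable_card_vertexIndices hF).congr (hcard.mono fun ω hω => hω.symm)) ?_
    fun i => ((n + k - i).choose k : ℝ)
  filter_upwards [hcard] with ω hω
  simpa only [hω, Fintype.card_fin] using Finset.card_le_univ (vertexIndices F ω)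

end UniformDistribution

section Triangle

lemma measure_prod_setOf_fst_mem_snd_mem_Icc {α : Type*} [MeasurableSpace α] {μ : Measure α}
    {s : Set α} {f g : α → ℝ} (hf : Measurable f) (hg : Measurable g) (hs : MeasurableSet s) :
    μ.prod volume {p : α × ℝ | p.1 ∈ s ∧ p.2 ∈ Icc (f p.1) (g p.1)} =
      ∫⁻ x in s, ENNReal.ofReal (g x - f x) ∂μ := by
  rw [Measure.prod_apply (measurableSet_region_between_cc hf hg hs), ← lintegral_indicator hs]
  refine lintegral_congr fun x => ?_
  by_cases hx : x ∈ s
  · simp only [preimage_ofPred_eq, hx, true_and, ofPred_mem_eq, Real.volume_Icc, indicator_of_mem]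
  · simp only [preimage_ofPred_eq, hx, false_and, ofPred_false, measure_empty, not_false_eq_true,
      indicator_of_notMem]

lemma T_eq_setOf_nonneg_add_le_one : T = {p | 0 ≤ p.1 ∧ 0 ≤ p.2 ∧ p.1 + p.2 ≤ 1} := by
  have hconvex : Convex ℝ {p : ℝ × ℝ | 0 ≤ p.1 ∧ 0 ≤ p.2 ∧ p.1 + p.2 ≤ 1} :=
    (convex_halfSpace_ge (LinearMap.fst ℝ ℝ ℝ).isLinear 0).inter <|
      (convex_halfSpace_ge (LinearMap.snd ℝ ℝ ℝ).isLinear 0).inter <|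
        convex_halfSpace_le (LinearMap.fst ℝ ℝ ℝ + LinearMap.snd ℝ ℝ ℝ).isLinear 1
  refine Subset.antisymm (convexHull_min ?_ hconvex) fun p ⟨hp₁, hp₂, hp⟩ => ?_
  · rintro p (rfl | rfl | rfl) <;> norm_num
  · have hcombination : p = ∑ i, ![1 - p.1 - p.2, p.1, p.2] i • ![(0, 0), (1, 0), (0, 1)] i := by
      ext <;> simp [Fin.sum_univ_three]
    rw [hcombination]
    refine (convex_convexHull ℝ _).sum_mem (fun i _ => ?_) ?_ fun i _ => subset_convexHull ℝ _ ?_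
    · fin_cases i <;> simp <;> linarith
    · simp [Fin.sum_univ_three, sub_sub, add_assoc]
    · fin_cases i <;> simp

lemma convex_T : Convex ℝ T :=
  convex_convexHull ℝ _

lemma measurableSet_T : MeasurableSet T :=
  ((toFinite _).isClosed_convexHull ℝ).measurableSet

lemma volume_T : volume T = 2⁻¹ := by
  have hregion : T = {p | p.1 ∈ Icc 0 1 ∧ p.2 ∈ Icc 0 (1 - p.1)} := by
    ext p
    simp only [T_eq_setOf_nonneg_add_le_one, mem_ofPred_eq, mem_Icc]
    grind
  have hnonneg : 0 ≤ᵐ[volume.restrict (Icc (0 : ℝ) 1)] fun x => 1 - x - 0 :=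
    ae_restrict_of_forall_mem measurableSet_Icc fun x hx => by simpa using hx.2
  rw [hregion, Measure.volume_eq_prod, measure_prod_setOf_fst_mem_snd_mem_Icc measurable_const
    (by fun_prop) measurableSet_Icc, ← ofReal_integral_eq_lintegral_ofReal
    (by fun_prop : Continuous fun x : ℝ => 1 - x - 0).continuousOn.integrableOn_Icc hnonneg,
    integral_Icc_eq_integral_Ioc, ← intervalIntegral.integral_of_le zero_le_one]
  have hintegral : ∫ x in (0 : ℝ)..1, (1 - x - 0) = 2⁻¹ := by
    simp only [sub_zero]
    rw [intervalIntegral.integral_sub (by simp) (by simp)]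
    norm_num
  rw [hintegral, ENNReal.ofReal_inv_of_pos two_pos, ENNReal.ofReal_ofNat]

lemma corners_subset_extremePoints_T : {(1, 0), (0, 1)} ⊆ T.extremePoints ℝ := by
  refine Subset.trans ?_ exposedPoints_subset_extremePoints
  rw [T_eq_setOf_nonneg_add_le_one]
  rintro _ (rfl | rfl)
  · refine ⟨by norm_num, .fst ℝ ℝ ℝ, ?_⟩
    rintro ⟨x, y⟩ ⟨_, hy, hxy⟩
    exact ⟨show x ≤ 1 by grind, fun h : 1 ≤ x => Prod.ext (by grind) (by grind)⟩
  · refine ⟨by norm_num, .snd ℝ ℝ ℝ, ?_⟩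
    rintro ⟨x, y⟩ ⟨hx, _, hxy⟩
    exact ⟨show y ≤ 1 by grind, fun h : 1 ≤ y => Prod.ext (by grind) (by grind)⟩

lemma P_eq_pi_cond (n : ℕ) : P n = Measure.pi fun _ => volume[|T] := by
  rw [P, μT, ProbabilityTheory.cond, volume_T, inv_inv]

lemma V_eq_div (n : ℕ) (ω : Fin n → ℝ × ℝ) :
    V n ω = volume.real (anchoredHull {(1, 0), (0, 1)} ω) / volume.real T := by
  rw [measureReal_def volume T, volume_T, ENNReal.toReal_inv, ENNReal.toReal_ofNat, div_inv_eq_mul,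
    mul_comm]
  rfl

lemma N_eq_ncard_sub_ncard (n : ℕ) (ω : Fin n → ℝ × ℝ) :
    N n ω = ((anchoredHull {(1, 0), (0, 1)} ω).extremePoints ℝ).ncard -
      ({(1, 0), (0, 1)} : Set (ℝ × ℝ)).ncard := by
  rw [ncard_pair (by norm_num)]
  rfl

end Triangle

/-- `C(n+k,k) E[V_n^k] = E[C(n+k-N_{n+k},k)]`, equivalently the sum over
the distribution of `N_{n+k}`. -/
theorem stmt0 (n k : ℕ) :
    (((n + k).choose k : ℝ) * ∫ ω, (V n ω) ^ k ∂ P n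
      = ∫ ω, (((n + k - N (n + k) ω).choose k : ℝ)) ∂ P (n + k)) ∧
    (((n + k).choose k : ℝ) * ∫ ω, (V n ω) ^ k ∂ P n
      = ∑ i ∈ Finset.range (n + k + 1),
          ((n + k - i).choose k : ℝ) * (P (n + k) {ω | N (n + k) ω = i}).toReal) := by
  simp only [V_eq_div, N_eq_ncard_sub_ncard, P_eq_pi_cond]
  exact stmt0_general convex_T measurableSet_T (by simp [volume_T]) (by simp [volume_T])
    (toFinite _) corners_subset_extremePoints_T n k

end
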